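/- Let H be a complex Hilbert space, ε > 0, and x, f ∈ H nonzero. Then ⟨x, f⟩ = 0 if and only if σ_ε(x ⊗ f) equals the open disc centered at 0 with radius √(ε² + ‖x‖‖f‖ε). -/

import Mathlib

open scoped InnerProductSpace

/-- The rank-one operator `x ⊗ f : z ↦ ⟨z, f⟩ x`. -/
noncomputable def rankOne {H : Type*} [NormedAddCommGroup H] [InnerProductSpace ℂ H]
    (x f : H) : H →L[ℂ] H :=
  (innerSL ℂ f).smulRight x

/-- The ε-pseudo spectrum `σ_ε(A) = {z : ‖(zI - A)⁻¹‖ > ε⁻¹}`, where points `z`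
with `zI - A` not invertible are included. -/
noncomputable def pseudoSpectrum {H : Type*} [NormedAddCommGroup H]
    [InnerProductSpace ℂ H] [CompleteSpace H] (ε : ℝ) (A : H →L[ℂ] H) : Set ℂ :=
  {z | ¬ IsUnit (z • (1 : H →L[ℂ] H) - A) ∨
    ε⁻¹ < ‖Ring.inverse (z • (1 : H →L[ℂ] H) - A)‖}

lemma mem_pseudo {H : Type*} [NormedAddCommGroup H] [InnerProductSpace ℂ H]
    [CompleteSpace H] (ε : ℝ) (hε : 0 < ε) (A : H →L[ℂ] H) (z : ℂ) (v : H)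
    (h : ‖z • v - A v‖ < ε * ‖v‖) : z ∈ pseudoSpectrum ε A := by
  by_cases hu : IsUnit (z • (1 : H →L[ℂ] H) - A)
  · right
    by_contra hc
    rw [not_lt] at hc
    have h1 : Ring.inverse (z • (1 : H →L[ℂ] H) - A) (z • v - A v) = v := by
      have := congrArg (fun T : H →L[ℂ] H => T v) (Ring.inverse_mul_cancel _ hu)
      simpa using this
    have h2 := (Ring.inverse (z • (1 : H →L[ℂ] H) - A)).le_opNorm (z • v - A v)
    rw [h1] at h2
    have h3 := mul_le_mul_of_nonneg_right hc (norm_nonneg (z • v - A v))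
    have h4 : ε * ‖v‖ ≤ ε * (ε⁻¹ * ‖z • v - A v‖) :=
      mul_le_mul_of_nonneg_left (h2.trans h3) hε.le
    rw [mul_inv_cancel_left₀ hε.ne'] at h4
    linarith
  · exact Or.inl hu

lemma mem_of_lt {H : Type*} [NormedAddCommGroup H] [InnerProductSpace ℂ H]
    [CompleteSpace H] (ε : ℝ) (hε : 0 < ε) (x f : H) (hx : x ≠ 0) (hf : f ≠ 0)
    (u : ℂ) (hu : ‖u‖ = 1) (l ρ : ℝ) (hl : 0 ≤ l) (hρ : 0 < ρ) (hlρ : l ≤ ρ)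
    (hfx : ⟪f, x⟫_ℂ = l * u) (h : ρ * (ρ - l) < ε ^ 2 + ‖x‖ * ‖f‖ * ε) :
    (ρ * u : ℂ) ∈ pseudoSpectrum ε (rankOne x f) := by
  have hx' : 0 < ‖x‖ := norm_pos_iff.2 hx
  have hf' : 0 < ‖f‖ := norm_pos_iff.2 hf
  obtain ⟨a, ha⟩ : ∃ a, a = ‖x‖ * ‖f‖ := ⟨_, rfl⟩
  have ha0 : 0 < a := ha ▸ mul_pos hx' hf'
  rw [← ha] at h
  obtain ⟨s, hs0, hs⟩ : ∃ s : ℝ, 0 ≤ s ∧ s * (s + a) = ρ * (ρ - l) := by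
    have hd : 0 ≤ ρ * (ρ - l) := mul_nonneg hρ.le (by linarith)
    refine ⟨(Real.sqrt (a ^ 2 + 4 * (ρ * (ρ - l))) - a) / 2, ?_, ?_⟩
    · have : a ≤ Real.sqrt (a ^ 2 + 4 * (ρ * (ρ - l))) := Real.le_sqrt_of_sq_le (by linarith)
      linarith
    · have := Real.sq_sqrt (show 0 ≤ a ^ 2 + 4 * (ρ * (ρ - l)) by positivity)
      linarith
  have hsε : s < ε := by
    by_contra hc
    rw [not_lt] at hc
    nlinarith
  have huu : (starRingEnd ℂ u) * u = 1 := by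
    rw [mul_comm, Complex.mul_conj, Complex.normSq_eq_norm_sq, hu]; simp
  obtain ⟨p, hp⟩ : ∃ p : H, p = ((‖f‖ : ℂ) * starRingEnd ℂ u) • x := ⟨_, rfl⟩
  obtain ⟨q, hq⟩ : ∃ q : H, q = (‖x‖ : ℂ) • f := ⟨_, rfl⟩
  have hnp : ‖p‖ = a := by
    rw [hp, norm_smul, norm_mul, RCLike.norm_conj, hu]; simp [ha, mul_comm]
  have hnq : ‖q‖ = a := by
    rw [hq, norm_smul]; simp [ha]
  have hqp : ⟪q, p⟫_ℂ = ((a * l : ℝ) : ℂ) := by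
    rw [hq, hp, inner_smul_left, inner_smul_right, hfx, ha]
    simp only [Complex.conj_ofReal]
    push_cast
    linear_combination (‖x‖ * ‖f‖ * l : ℂ) * huu
  have hfp : ⟪f, p⟫_ℂ = ‖f‖ * l := by
    rw [hp, inner_smul_right, hfx]
    linear_combination (‖f‖ * l : ℂ) * huu
  have hfq : ⟪f, q⟫_ℂ = a * ‖f‖ := by
    rw [hq, inner_smul_right, inner_self_eq_norm_sq_to_K, ha]
    push_cast
    simp only [Complex.coe_algebraMap]
    ring
  have hxp : (‖f‖ : ℂ) • x = u • p := by
    rw [hp, smul_smul]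
    congr 1
    linear_combination (-‖f‖ : ℂ) * huu
  have hpq : ⟪p, q⟫_ℂ = ((a * l : ℝ) : ℂ) := by
    rw [← inner_conj_symm, hqp, Complex.conj_ofReal]
  have hn : ∀ b c : ℝ, ‖(b : ℂ) • p + (c : ℂ) • q‖ ^ 2
      = b ^ 2 * a ^ 2 + 2 * (b * c * (a * l)) + c ^ 2 * a ^ 2 := by
    intro b c
    rw [@norm_add_sq ℂ, inner_smul_left, inner_smul_right, hpq, norm_smul, norm_smul, hnp, hnq,
      Complex.conj_ofReal, ← Complex.ofReal_mul, ← Complex.ofReal_mul]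
    simp only [RCLike.re_to_complex, Complex.ofReal_re, Complex.norm_real, mul_pow,
      Real.norm_eq_abs, sq_abs]
    ring
  have hsC : (s * (s + a) : ℂ) = ρ * (ρ - l) := by exact_mod_cast hs
  have key : ((ρ : ℂ) * u) • ((ρ : ℂ) • p + (s : ℂ) • q)
      - rankOne x f ((ρ : ℂ) • p + (s : ℂ) • q)
      = (u * s) • ((s : ℂ) • p + (ρ : ℂ) • q) := by
    have : rankOne x f ((ρ : ℂ) • p + (s : ℂ) • q) = ((ρ * l + s * a : ℂ) * u) • p := by
      rw [mul_smul, ← hxp]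
      simp only [rankOne, ContinuousLinearMap.smulRight_apply, innerSL_apply_apply,
        inner_add_right, inner_smul_right, hfp, hfq, smul_smul]
      congr 1
      ring
    rw [this]
    match_scalars
    · linear_combination (-u) * hsC
    · ring
  apply mem_pseudo ε hε _ _ ((ρ : ℂ) • p + (s : ℂ) • q)
  rw [key, norm_smul, norm_mul, hu, one_mul, Complex.norm_real, Real.norm_of_nonneg hs0]
  have heq : ‖(s : ℂ) • p + (ρ : ℂ) • q‖ = ‖(ρ : ℂ) • p + (s : ℂ) • q‖ := by
    rw [← sq_eq_sq₀ (norm_nonneg _) (norm_nonneg _), hn, hn]; ring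
  rw [heq]
  apply mul_lt_mul_of_pos_right hsε
  have : 0 < ‖(ρ : ℂ) • p + (s : ℂ) • q‖ ^ 2 := by
    rw [hn]; positivity
  exact lt_of_le_of_ne (norm_nonneg _) (fun h0 => by rw [← h0] at this; norm_num at this)

lemma bound_aux {H : Type*} [NormedAddCommGroup H] [InnerProductSpace ℂ H]
    (x f w : H) (hx : x ≠ 0) (hf : f ≠ 0) (hfx : ⟪f, x⟫_ℂ = 0) (z : ℂ) (ε k : ℝ)
    (hε : 0 < ε) (hk : k * ε = ‖z‖ ^ 2) (hka : ‖x‖ * ‖f‖ + ε ≤ k) :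
    ‖z • w + ⟪f, w⟫_ℂ • x‖ ≤ k * ‖w‖ := by
  have hx' : 0 < ‖x‖ := norm_pos_iff.2 hx
  have hf' : 0 < ‖f‖ := norm_pos_iff.2 hf
  have hk0 : 0 < k := lt_of_lt_of_le (by positivity) hka
  obtain ⟨w', hw'⟩ : ∃ w' : H, w' = w - (⟪x, w⟫_ℂ / (‖x‖ : ℂ) ^ 2) • x := ⟨_, rfl⟩
  have hxC : (‖x‖ : ℂ) ≠ 0 := by exact_mod_cast hx'.ne'
  have hxw' : ⟪x, w'⟫_ℂ = 0 := by
    rw [hw', inner_sub_right, inner_smul_right, inner_self_eq_norm_sq_to_K]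
    simp only [Complex.coe_algebraMap]
    field_simp
    ring
  have hfw' : ⟪f, w⟫_ℂ = ⟪f, w'⟫_ℂ := by
    rw [hw', inner_sub_right, inner_smul_right, hfx]; simp
  obtain ⟨y, hy⟩ : ∃ y, y = ‖⟪x, w⟫_ℂ‖ / ‖x‖ := ⟨_, rfl⟩
  have hy0 : 0 ≤ y := by rw [hy]; positivity
  have hwsq : ‖w‖ ^ 2 = y ^ 2 + ‖w'‖ ^ 2 := by
    have e : w = (⟪x, w⟫_ℂ / (‖x‖ : ℂ) ^ 2) • x + w' := by rw [hw']; abel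
    have : ‖w‖ ^ 2 = ‖(⟪x, w⟫_ℂ / (‖x‖ : ℂ) ^ 2) • x + w'‖ ^ 2 := by rw [← e]
    rw [this, @norm_add_sq ℂ, inner_smul_left, hxw', norm_smul, norm_div, norm_pow,
      Complex.norm_real, norm_norm, hy]
    simp
    field_simp
  have hg : ‖⟪f, w⟫_ℂ‖ ≤ ‖f‖ * ‖w'‖ := by rw [hfw']; exact norm_inner_le_norm _ _
  have hG : ‖⟪f, w⟫_ℂ‖ * ‖x‖ ≤ (‖x‖ * ‖f‖) * ‖w'‖ := by nlinarith
  have hxw : ‖⟪w, x⟫_ℂ‖ = y * ‖x‖ := by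
    rw [norm_inner_symm, hy]; field_simp
  have hre : RCLike.re ⟪z • w, ⟪f, w⟫_ℂ • x⟫_ℂ ≤ ‖z‖ * y * (‖⟪f, w⟫_ℂ‖ * ‖x‖) := by
    refine (RCLike.re_le_norm _).trans (le_of_eq ?_)
    rw [inner_smul_left, inner_smul_right, norm_mul, norm_mul, RCLike.norm_conj, hxw]; ring
  refine (sq_le_sq₀ (by positivity) (by positivity)).1 ?_
  rw [@norm_add_sq ℂ, norm_smul, norm_smul]
  generalize RCLike.re ⟪z • w, ⟪f, w⟫_ℂ • x⟫_ℂ = c at *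
  generalize hGd : ‖⟪f, w⟫_ℂ‖ * ‖x‖ = G at *
  have hG0 : 0 ≤ G := by rw [← hGd]; positivity
  generalize had : ‖x‖ * ‖f‖ = a at *
  have ha0 : 0 < a := by rw [← had]; positivity
  have hr0 := norm_nonneg z
  have hw0 := norm_nonneg w'
  generalize ‖z‖ = r at *
  generalize ‖w'‖ = t at *
  rw [mul_pow, mul_pow, hwsq]
  have h1 : r * y * G ≤ r * y * (a * t) := mul_le_mul_of_nonneg_left hG (by positivity)
  have h2 : G ^ 2 ≤ a ^ 2 * t ^ 2 := by rw [← mul_pow]; gcongr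
  have h3 : 2 * r * y * t ≤ k * y ^ 2 + ε * t ^ 2 := by
    have : (2 * r * y * t) ^ 2 ≤ (k * y ^ 2 + ε * t ^ 2) ^ 2 := by
      have e : (2 * r * y * t) ^ 2 = 4 * (k * ε) * y ^ 2 * t ^ 2 := by rw [hk]; ring
      rw [e]
      nlinarith [sq_nonneg (k * y ^ 2 - ε * t ^ 2)]
    exact (sq_le_sq₀ (by positivity) (by positivity)).1 this
  have h4 : a * k + r ^ 2 ≤ k ^ 2 := by rw [← hk]; nlinarith
  have h5 : a * ε + a ^ 2 + r ^ 2 ≤ k ^ 2 := by nlinarith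
  have h6 := mul_le_mul_of_nonneg_left h3 ha0.le
  have h7 := mul_le_mul_of_nonneg_right h4 (sq_nonneg y)
  have h8 := mul_le_mul_of_nonneg_right h5 (sq_nonneg t)
  linarith

theorem stmt_9 {H : Type*} [NormedAddCommGroup H] [InnerProductSpace ℂ H]
    [CompleteSpace H] (ε : ℝ) (hε : 0 < ε) (x f : H) (hx : x ≠ 0) (hf : f ≠ 0) :
    ⟪f, x⟫_ℂ = 0 ↔
      pseudoSpectrum ε (rankOne x f) =
        Metric.ball (0 : ℂ) (Real.sqrt (ε ^ 2 + ‖x‖ * ‖f‖ * ε)) := by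
  have hx' : 0 < ‖x‖ := norm_pos_iff.2 hx
  have hf' : 0 < ‖f‖ := norm_pos_iff.2 hf
  have hR : 0 < ε ^ 2 + ‖x‖ * ‖f‖ * ε := by positivity
  constructor
  · intro hfx
    ext z
    rw [mem_ball_zero_iff, Real.lt_sqrt (norm_nonneg z)]
    constructor
    · intro hz
      by_contra hc
      rw [not_lt] at hc
      have hz0 : z ≠ 0 := by
        rintro rfl
        simp at hc
        linarith
      have hzn : 0 < ‖z‖ := norm_pos_iff.2 hz0
      obtain ⟨B, hB⟩ : ∃ B : H →L[ℂ] H,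
        B = (z ^ 2)⁻¹ • (z • (1 : H →L[ℂ] H) + rankOne x f) := ⟨_, rfl⟩
      have hAA : ∀ v, rankOne x f (rankOne x f v) = 0 := by
        intro v
        simp [rankOne, inner_smul_right, hfx]
      have h1 : (z • (1 : H →L[ℂ] H) - rankOne x f) * B = 1 := by
        ext v
        rw [hB]
        simp [hAA]
        match_scalars <;> field_simp <;> ring
      have h2 : B * (z • (1 : H →L[ℂ] H) - rankOne x f) = 1 := by
        ext v
        rw [hB]
        simp [hAA]
        match_scalars <;> field_simp <;> ring
      have hinv : Ring.inverse (z • (1 : H →L[ℂ] H) - rankOne x f) = B :=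
        Ring.inverse_unit ⟨_, B, h1, h2⟩
      rcases hz with hz | hz
      · exact hz ⟨⟨_, B, h1, h2⟩, rfl⟩
      · rw [hinv] at hz
        refine absurd hz (not_lt.2 ?_)
        apply ContinuousLinearMap.opNorm_le_bound _ (by positivity)
        intro w
        have hb := bound_aux x f w hx hf hfx z ε (‖z‖ ^ 2 / ε) hε (by field_simp) (by
          rw [le_div_iff₀ hε]; linarith)
        have : B w = (z ^ 2)⁻¹ • (z • w + ⟪f, w⟫_ℂ • x) := by
          rw [hB]; simp [rankOne]
        rw [this, norm_smul, norm_inv, norm_pow, inv_mul_le_iff₀ (by positivity)]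
        refine hb.trans (le_of_eq ?_)
        field_simp
    · intro hz
      by_cases hz0 : z = 0
      · subst hz0
        apply mem_pseudo ε hε _ _ x
        have : rankOne x f x = 0 := by simp [rankOne, hfx]
        rw [this]
        simp only [smul_zero, zero_smul, sub_zero, norm_zero]
        positivity
      · have hzn : 0 < ‖z‖ := norm_pos_iff.2 hz0
        have hzC : (‖z‖ : ℂ) ≠ 0 := by exact_mod_cast hzn.ne'
        have := mem_of_lt ε hε x f hx hf (z / ‖z‖) (by simp [hz0]) 0 ‖z‖ le_rfl hzn hzn.le
          (by simp [hfx]) (by nlinarith)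
        rwa [mul_div_cancel₀ _ hzC] at this
  · intro h
    by_contra ht
    have htn : 0 < ‖⟪f, x⟫_ℂ‖ := norm_pos_iff.2 ht
    have htC : (‖⟪f, x⟫_ℂ‖ : ℂ) ≠ 0 := by exact_mod_cast htn.ne'
    have hm : ⟪f, x⟫_ℂ ∈ pseudoSpectrum ε (rankOne x f) := by
      apply mem_pseudo ε hε _ _ x
      have : rankOne x f x = ⟪f, x⟫_ℂ • x := by simp [rankOne]
      rw [this, sub_self, norm_zero]
      positivity
    rw [h, mem_ball_zero_iff] at hm
    have hRs := Real.sq_sqrt hR.le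
    have hu : ‖⟪f, x⟫_ℂ / (‖⟪f, x⟫_ℂ‖ : ℂ)‖ = 1 := by
      rw [norm_div, Complex.norm_real, norm_norm, div_self htn.ne']
    have := mem_of_lt ε hε x f hx hf (⟪f, x⟫_ℂ / ‖⟪f, x⟫_ℂ‖) hu ‖⟪f, x⟫_ℂ‖ _ htn.le
      (htn.trans hm) hm.le (by rw [mul_div_cancel₀ _ htC]) (by nlinarith)
    rw [h, mem_ball_zero_iff, norm_mul, hu, Complex.norm_real,
      Real.norm_of_nonneg (Real.sqrt_nonneg _), mul_one] at this
    exact lt_irrefl _ this
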